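/- Let f : ℝⁿ × ℝᵐ → ℝⁿ be continuously differentiable, P, Q symmetric positive definite n×n real matrices, R symmetric positive definite m×m, K ∈ ℝ^{m×n}, α > 0, and t₀ < t₁. Let x^r : [t₀,t₁] → ℝⁿ be differentiable and u^r : [t₀,t₁] → ℝᵐ with (d/dt)x^r(t) = f(x^r(t), u^r(t)), and let x : [t₀,t₁] → ℝⁿ be differentiable with (d/dt)x(t) = f(x(t), u^r(t) + K(x(t) − x^r(t))). Set δ(t) := x(t) − x^r(t) and V(t) := δ(t)ᵀPδ(t). Suppose V(t₀) ≤ α², and suppose that for every t ∈ [t₀,t₁] with V(t) ≤ α² and every s ∈ [0,1], at z := (x^r(t) + sδ(t), u^r(t) + sKδ(t)) one has P(A(z) + B(z)K) + (A(z) + B(z)K)ᵀP ⪯ −(Q + KᵀRK). Then V(t) ≤ α² for all t ∈ [t₀,t₁], and moreover there exists λ > 0, depending only on P and Q, such that V(t) ≤ V(t₀) e^{−λ(t−t₀)} for all t ∈ [t₀,t₁]. -/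

import Mathlib

open Matrix

/-- The Jacobian matrix of `f : ℝⁿ × ℝᵐ → ℝⁿ` with respect to its first
(state) argument, evaluated at `z`. -/
noncomputable def jacAmat {n m : ℕ} (f : ((Fin n → ℝ) × (Fin m → ℝ)) → (Fin n → ℝ))
    (z : (Fin n → ℝ) × (Fin m → ℝ)) : Matrix (Fin n) (Fin n) ℝ :=
  LinearMap.toMatrix' (fderiv ℝ (fun x => f (x, z.2)) z.1 : (Fin n → ℝ) →ₗ[ℝ] (Fin n → ℝ))

/-- The Jacobian matrix of `f : ℝⁿ × ℝᵐ → ℝⁿ` with respect to its second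
(input) argument, evaluated at `z`. -/
noncomputable def jacBmat {n m : ℕ} (f : ((Fin n → ℝ) × (Fin m → ℝ)) → (Fin n → ℝ))
    (z : (Fin n → ℝ) × (Fin m → ℝ)) : Matrix (Fin n) (Fin m) ℝ :=
  LinearMap.toMatrix' (fderiv ℝ (fun u => f (z.1, u)) z.2 : (Fin m → ℝ) →ₗ[ℝ] (Fin n → ℝ))

/-- `M ⪯ N` for symmetric real matrices: `N - M` is positive semidefinite. -/
def matLE {n : ℕ} (M N : Matrix (Fin n) (Fin n) ℝ) : Prop := (N - M).PosSemidef

/-!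
Along the segment from `(xʳ, uʳ)` to `(x, uʳ + Kδ)` the mean value theorem, applied to the scalar
function `w ↦ δᵀPw + wᵀPδ`, expresses `V'` as the quadratic form of `PM + MᵀP` at `δ` for the
closed-loop Jacobian `M` at a single point of the segment. The matrix inequality at that point
gives `V' ≤ -δᵀQδ ≤ -λV`, where `λ` comes from coercivity of `Q` against boundedness of `P`. This
holds only while `V ≤ α²`, but on the boundary `V = α²` it reads `V' < 0`, so `V` cannot leave the
sublevel set, and Grönwall's inequality gives the exponential decay.
-/

section ScalarComparison

open Set

variable {V V' : ℝ → ℝ} {a b : ℝ}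

theorem le_mul_exp_of_deriv_right_le {k : ℝ} (hV : ContinuousOn V (Icc a b))
    (hV' : ∀ t ∈ Ico a b, HasDerivWithinAt V (V' t) (Ici t) t)
    (hle : ∀ t ∈ Ico a b, V' t ≤ k * V t) :
    ∀ t ∈ Icc a b, V t ≤ V a * Real.exp (k * (t - a)) := by
  simpa only [gronwallBound_ε0] using
    le_gronwallBound_of_liminf_deriv_right_le (ε := 0) hV
      (fun t ht _ hr => (hV' t ht).liminf_right_slope_le hr) le_rfl
      fun t ht => (hle t ht).trans_eq (add_zero _).symm

theorem le_and_le_mul_exp_of_deriv_le_on_sublevel {c β : ℝ} (hc : 0 < c) (hβ : 0 < β)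
    (hV : ∀ t ∈ Icc a b, HasDerivWithinAt V (V' t) (Icc a b) t) (ha : V a ≤ β)
    (hle : ∀ t ∈ Icc a b, V t ≤ β → V' t ≤ -c * V t) :
    (∀ t ∈ Icc a b, V t ≤ β) ∧ ∀ t ∈ Icc a b, V t ≤ V a * Real.exp (-c * (t - a)) := by
  have hcont : ContinuousOn V (Icc a b) := fun t ht => (hV t ht).continuousWithinAt
  have hright : ∀ t ∈ Ico a b, HasDerivWithinAt V (V' t) (Ici t) t := fun t ht =>
    (hV t (Ico_subset_Icc_self ht)).mono_of_mem_nhdsWithin (Icc_mem_nhdsGE_of_mem ht)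
  have hboundary : ∀ t ∈ Ico a b, V t = β → V' t < 0 := fun t ht hVt =>
    calc V' t ≤ -c * V t := hle t (Ico_subset_Icc_self ht) hVt.le
      _ = -c * β := by rw [hVt]
      _ < 0 := mul_neg_of_neg_of_pos (neg_neg_of_pos hc) hβ
  have hsub : ∀ t ∈ Icc a b, V t ≤ β :=
    image_le_of_deriv_right_lt_deriv_boundary hcont hright ha (fun t => hasDerivAt_const t β)
      hboundary
  refine ⟨hsub, le_mul_exp_of_deriv_right_le hcont hright fun t ht => ?_⟩
  have ht' := Ico_subset_Icc_self ht
  exact hle t ht' (hsub t ht')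

end ScalarComparison

section NormedSpace

open Set

variable {E F U : Type*} [NormedAddCommGroup E] [NormedSpace ℝ E] [NormedAddCommGroup F]
  [NormedSpace ℝ F] [NormedAddCommGroup U] [NormedSpace ℝ U]

theorem isCoercive_of_forall_apply_self_pos [FiniteDimensional ℝ E] {B : E →L[ℝ] E →L[ℝ] ℝ}
    (hB : ∀ v, v ≠ 0 → 0 < B v v) : IsCoercive B := by
  have : ProperSpace E := FiniteDimensional.proper ℝ E
  obtain ⟨C, hC, hle⟩ := (isCompact_sphere (0 : E) 1).exists_forall_le' (f := fun v => B v v)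
    (a := 0) (by fun_prop) fun v hv => hB v (ne_zero_of_mem_unit_sphere ⟨v, hv⟩)
  refine ⟨C, hC, fun v => ?_⟩
  rcases eq_or_ne v 0 with rfl | hv
  · simp
  have hnorm : 0 < ‖v‖ := norm_pos_iff.2 hv
  have hunit : C ≤ ‖v‖⁻¹ * (‖v‖⁻¹ * B v v) := by
    simpa using hle (‖v‖⁻¹ • v) (by simp [norm_smul, hnorm.ne'])
  rwa [← mul_assoc, ← mul_inv, inv_mul_eq_div, le_div_iff₀ (by positivity), ← mul_assoc] at hunit

theorem exists_pos_mul_apply_self_le_of_isCoercive {B : E →L[ℝ] E →L[ℝ] ℝ} (hB : IsCoercive B)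
    (A : E →L[ℝ] E →L[ℝ] ℝ) : ∃ c : ℝ, 0 < c ∧ ∀ v, c * A v v ≤ B v v := by
  obtain ⟨C, hC, hle⟩ := hB
  -- The `+ 1` keeps the quotient positive when `A = 0`.
  refine ⟨C / (‖A‖ + 1), by positivity, fun v => ?_⟩
  have hA : A v v ≤ (‖A‖ + 1) * ‖v‖ * ‖v‖ :=
    calc A v v ≤ ‖A‖ * ‖v‖ * ‖v‖ := (le_abs_self _).trans (A.le_opNorm₂ v v)
      _ ≤ (‖A‖ + 1) * ‖v‖ * ‖v‖ := by gcongr; exact le_add_of_nonneg_right zero_le_one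
  calc C / (‖A‖ + 1) * A v v ≤ C / (‖A‖ + 1) * ((‖A‖ + 1) * ‖v‖ * ‖v‖) := by gcongr
    _ = C * ‖v‖ * ‖v‖ := by field_simp
    _ ≤ B v v := hle v

theorem exists_apply_sub_eq_apply_fderiv {f : E → F} (hf : Differentiable ℝ f)
    (φ : F →L[ℝ] ℝ) (a v : E) :
    ∃ s ∈ Icc (0 : ℝ) 1, φ (f (a + v) - f a) = φ (fderiv ℝ f (a + s • v) v) := by
  obtain ⟨z, hz, hmean⟩ := domain_mvt (x := a) (y := a + v)
    (fun z _ => (φ.hasFDerivAt.comp z (hf z).hasFDerivAt).hasFDerivWithinAt) convex_univ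
    (mem_univ _) (mem_univ _)
  rw [segment_eq_image', add_sub_cancel_left] at hz
  obtain ⟨s, hs, rfl⟩ := hz
  exact ⟨s, hs, by simpa using hmean⟩

theorem tracking_error_le_and_le_mul_exp {f : E × U → E} (hf : Differentiable ℝ f)
    (B : E →L[ℝ] E →L[ℝ] ℝ) (κ : E → U) {c β t₀ t₁ : ℝ} (hc : 0 < c) (hβ : 0 < β)
    {xr x : ℝ → E} {ur : ℝ → U}
    (hxr : ∀ t ∈ Icc t₀ t₁, HasDerivWithinAt xr (f (xr t, ur t)) (Icc t₀ t₁) t)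
    (hx : ∀ t ∈ Icc t₀ t₁,
      HasDerivWithinAt x (f (x t, ur t + κ (x t - xr t))) (Icc t₀ t₁) t)
    (h₀ : B (x t₀ - xr t₀) (x t₀ - xr t₀) ≤ β)
    (hdecr : ∀ t ∈ Icc t₀ t₁, B (x t - xr t) (x t - xr t) ≤ β → ∀ s ∈ Icc (0 : ℝ) 1,
      (B (x t - xr t) + B.flip (x t - xr t))
          (fderiv ℝ f (xr t + s • (x t - xr t), ur t + s • κ (x t - xr t))
            (x t - xr t, κ (x t - xr t))) ≤
        -c * B (x t - xr t) (x t - xr t)) :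
    (∀ t ∈ Icc t₀ t₁, B (x t - xr t) (x t - xr t) ≤ β) ∧
      ∀ t ∈ Icc t₀ t₁, B (x t - xr t) (x t - xr t) ≤
        B (x t₀ - xr t₀) (x t₀ - xr t₀) * Real.exp (-c * (t - t₀)) := by
  have herr : ∀ t ∈ Icc t₀ t₁, HasDerivWithinAt (fun t => x t - xr t)
      (f (x t, ur t + κ (x t - xr t)) - f (xr t, ur t)) (Icc t₀ t₁) t :=
    fun t ht => (hx t ht).fun_sub (hxr t ht)
  refine le_and_le_mul_exp_of_deriv_le_on_sublevel hc hβ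
    (fun t ht => B.hasDerivWithinAt_of_bilinear (herr t ht) (herr t ht)) h₀ fun t ht hVt => ?_
  obtain ⟨s, hs, hmean⟩ := exists_apply_sub_eq_apply_fderiv hf
    (B (x t - xr t) + B.flip (x t - xr t)) (xr t, ur t) (x t - xr t, κ (x t - xr t))
  rw [Prod.mk_add_mk, add_sub_cancel] at hmean
  exact hmean.trans_le (hdecr t ht hVt s hs)

end NormedSpace

section Jacobian

open Set

variable {n m : ℕ}

/-- The bilinear form `(v, w) ↦ vᵀ P w` of a real square matrix, as a continuous bilinear map, so
that the results on normed spaces apply to it. -/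
noncomputable def matForm {ι : Type*} [Fintype ι] [DecidableEq ι] (P : Matrix ι ι ℝ) :
    (ι → ℝ) →L[ℝ] (ι → ℝ) →L[ℝ] ℝ :=
  (Matrix.toLinearMap₂' ℝ P).toContinuousBilinearMap

theorem matForm_apply {ι : Type*} [Fintype ι] [DecidableEq ι] (P : Matrix ι ι ℝ) (v w : ι → ℝ) :
    matForm P v w = v ⬝ᵥ P *ᵥ w :=
  Matrix.toLinearMap₂'_apply' P v w

theorem isCoercive_matForm_of_posDef {ι : Type*} [Fintype ι] [DecidableEq ι] {Q : Matrix ι ι ℝ}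
    (hQ : Q.PosDef) : IsCoercive (matForm Q) :=
  isCoercive_of_forall_apply_self_pos fun v hv => by
    simpa only [matForm_apply, star_trivial] using hQ.dotProduct_mulVec_pos hv

/-- The Jacobian `A(z) + B(z) K` of `f` at `z` under the linear feedback `K`. -/
noncomputable def closedLoopJac (f : ((Fin n → ℝ) × (Fin m → ℝ)) → (Fin n → ℝ))
    (K : Matrix (Fin m) (Fin n) ℝ) (z : (Fin n → ℝ) × (Fin m → ℝ)) : Matrix (Fin n) (Fin n) ℝ :=
  jacAmat f z + jacBmat f z * K

theorem fderiv_apply_eq_jacAmat_add_jacBmat {f : ((Fin n → ℝ) × (Fin m → ℝ)) → (Fin n → ℝ)}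
    {z : (Fin n → ℝ) × (Fin m → ℝ)} (hf : DifferentiableAt ℝ f z) (v : Fin n → ℝ)
    (w : Fin m → ℝ) : fderiv ℝ f z (v, w) = jacAmat f z *ᵥ v + jacBmat f z *ᵥ w := by
  have hA : HasFDerivAt (fun x => f (x, z.2)) _ z.1 :=
    HasFDerivAt.comp (g := f) z.1 hf.hasFDerivAt (hasFDerivAt_prodMk_left z.1 z.2)
  have hB : HasFDerivAt (fun u => f (z.1, u)) _ z.2 :=
    HasFDerivAt.comp (g := f) z.2 hf.hasFDerivAt (hasFDerivAt_prodMk_right z.1 z.2)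
  rw [jacAmat, jacBmat, LinearMap.toMatrix'_mulVec, LinearMap.toMatrix'_mulVec, hA.fderiv,
    hB.fderiv]
  simp [← map_add]

theorem fderiv_apply_mulVec_eq_closedLoopJac_mulVec
    {f : ((Fin n → ℝ) × (Fin m → ℝ)) → (Fin n → ℝ)} {z : (Fin n → ℝ) × (Fin m → ℝ)}
    (hf : DifferentiableAt ℝ f z) (K : Matrix (Fin m) (Fin n) ℝ) (v : Fin n → ℝ) :
    fderiv ℝ f z (v, K *ᵥ v) = closedLoopJac f K z *ᵥ v := by
  rw [fderiv_apply_eq_jacAmat_add_jacBmat hf, closedLoopJac, add_mulVec, mulVec_mulVec]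

theorem matForm_add_flip_mulVec_le_of_matLE {P Q M : Matrix (Fin n) (Fin n) ℝ}
    {R : Matrix (Fin m) (Fin m) ℝ} (hR : R.PosSemidef) {K : Matrix (Fin m) (Fin n) ℝ}
    (h : matLE (P * M + Mᵀ * P) (-(Q + Kᵀ * R * K))) (v : Fin n → ℝ) :
    (matForm P v + (matForm P).flip v) (M *ᵥ v) ≤ -matForm Q v v := by
  have hLyap := Matrix.PosSemidef.dotProduct_mulVec_nonneg h v
  have hcost := hR.dotProduct_mulVec_nonneg (K *ᵥ v)
  have hK : v ⬝ᵥ Kᵀ *ᵥ R *ᵥ K *ᵥ v = K *ᵥ v ⬝ᵥ R *ᵥ K *ᵥ v := by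
    rw [dotProduct_transpose_mulVec, dotProduct_comm]
  have hM : v ⬝ᵥ Mᵀ *ᵥ P *ᵥ v = M *ᵥ v ⬝ᵥ P *ᵥ v := by
    rw [dotProduct_transpose_mulVec, dotProduct_comm]
  simp only [star_trivial, sub_mulVec, neg_mulVec, add_mulVec, ← mulVec_mulVec, dotProduct_sub,
    dotProduct_neg, dotProduct_add, hK, hM] at hLyap hcost
  simp only [_root_.add_apply, ContinuousLinearMap.flip_apply, matForm_apply]
  linarith

theorem stmt9_general (P : Matrix (Fin n) (Fin n) ℝ) {Q : Matrix (Fin n) (Fin n) ℝ}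
    (hQ : Q.PosDef) :
    ∃ lam : ℝ, 0 < lam ∧
      ∀ (m : ℕ) (f : ((Fin n → ℝ) × (Fin m → ℝ)) → (Fin n → ℝ)), Differentiable ℝ f →
      ∀ (R : Matrix (Fin m) (Fin m) ℝ), R.PosSemidef →
      ∀ (K : Matrix (Fin m) (Fin n) ℝ) (β : ℝ), 0 < β →
      ∀ (t₀ t₁ : ℝ) (xr x : ℝ → Fin n → ℝ) (ur : ℝ → Fin m → ℝ),
        (∀ t ∈ Icc t₀ t₁, HasDerivWithinAt xr (f (xr t, ur t)) (Icc t₀ t₁) t) →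
        (∀ t ∈ Icc t₀ t₁,
          HasDerivWithinAt x (f (x t, ur t + K *ᵥ (x t - xr t))) (Icc t₀ t₁) t) →
        (x t₀ - xr t₀) ⬝ᵥ P *ᵥ (x t₀ - xr t₀) ≤ β →
        (∀ t ∈ Icc t₀ t₁, (x t - xr t) ⬝ᵥ P *ᵥ (x t - xr t) ≤ β → ∀ s ∈ Icc (0 : ℝ) 1,
          matLE
            (P * closedLoopJac f K (xr t + s • (x t - xr t), ur t + s • K *ᵥ (x t - xr t)) +
              (closedLoopJac f K (xr t + s • (x t - xr t), ur t + s • K *ᵥ (x t - xr t)))ᵀ * P)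
            (-(Q + Kᵀ * R * K))) →
        (∀ t ∈ Icc t₀ t₁, (x t - xr t) ⬝ᵥ P *ᵥ (x t - xr t) ≤ β) ∧
        ∀ t ∈ Icc t₀ t₁, (x t - xr t) ⬝ᵥ P *ᵥ (x t - xr t) ≤
          (x t₀ - xr t₀) ⬝ᵥ P *ᵥ (x t₀ - xr t₀) * Real.exp (-lam * (t - t₀)) := by
  obtain ⟨c, hc, hPQ⟩ :=
    exists_pos_mul_apply_self_le_of_isCoercive (isCoercive_matForm_of_posDef hQ) (matForm P)
  refine ⟨c, hc, fun m f hf R hR K β hβ t₀ t₁ xr x ur hxr hx h₀ hLyap => ?_⟩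
  simp only [← matForm_apply P] at h₀ hLyap ⊢
  refine tracking_error_le_and_le_mul_exp hf (matForm P) K.mulVec hc hβ hxr hx h₀
    fun t ht hVt s hs => ?_
  rw [fderiv_apply_mulVec_eq_closedLoopJac_mulVec (hf _), neg_mul]
  exact (matForm_add_flip_mulVec_le_of_matLE hR (hLyap t ht hVt s hs) _).trans
    (neg_le_neg (hPQ _))

end Jacobian

/-- positive invariance of the terminal sublevel set
`{V ≤ α²}` of `V(t) = (x(t) - x^r(t))ᵀ P (x(t) - x^r(t))` under the terminal
control law, together with exponential decrease `V(t) ≤ V(t₀) e^{-λ(t-t₀)}`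
for some `λ > 0` depending only on `P` and `Q`. -/
theorem stmt9 {n : ℕ} (P Q : Matrix (Fin n) (Fin n) ℝ) (hP : P.PosDef)
    (hQ : Q.PosDef) :
    ∃ lam : ℝ, 0 < lam ∧
      ∀ (m : ℕ) (f : ((Fin n → ℝ) × (Fin m → ℝ)) → (Fin n → ℝ)),
        ContDiff ℝ 1 f →
      ∀ (R : Matrix (Fin m) (Fin m) ℝ), R.PosDef →
      ∀ (K : Matrix (Fin m) (Fin n) ℝ) (α : ℝ), 0 < α →
      ∀ (t₀ t₁ : ℝ), t₀ < t₁ →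
      ∀ (xr x : ℝ → Fin n → ℝ) (ur : ℝ → Fin m → ℝ),
        (∀ t ∈ Set.Icc t₀ t₁, HasDerivAt xr (f (xr t, ur t)) t) →
        (∀ t ∈ Set.Icc t₀ t₁,
          HasDerivAt x (f (x t, ur t + K.mulVec (x t - xr t))) t) →
        ((x t₀ - xr t₀) ⬝ᵥ P.mulVec (x t₀ - xr t₀) ≤ α ^ 2) →
        (∀ t ∈ Set.Icc t₀ t₁,
          ((x t - xr t) ⬝ᵥ P.mulVec (x t - xr t) ≤ α ^ 2) →
          ∀ s ∈ Set.Icc (0 : ℝ) 1,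
            matLE
              (P * (jacAmat f (xr t + s • (x t - xr t),
                               ur t + s • K.mulVec (x t - xr t)) +
                    jacBmat f (xr t + s • (x t - xr t),
                               ur t + s • K.mulVec (x t - xr t)) * K) +
               (jacAmat f (xr t + s • (x t - xr t),
                           ur t + s • K.mulVec (x t - xr t)) +
                jacBmat f (xr t + s • (x t - xr t),
                           ur t + s • K.mulVec (x t - xr t)) * K)ᵀ * P)
              (-(Q + Kᵀ * R * K))) →
        (∀ t ∈ Set.Icc t₀ t₁,
            (x t - xr t) ⬝ᵥ P.mulVec (x t - xr t) ≤ α ^ 2) ∧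
        (∀ t ∈ Set.Icc t₀ t₁,
            (x t - xr t) ⬝ᵥ P.mulVec (x t - xr t) ≤
              ((x t₀ - xr t₀) ⬝ᵥ P.mulVec (x t₀ - xr t₀)) *
                Real.exp (-lam * (t - t₀))) := by
  obtain ⟨lam, hlam, h⟩ := stmt9_general P hQ
  exact ⟨lam, hlam, fun m f hf R hR K α hα t₀ t₁ _ xr x ur hxr hx =>
    h m f (hf.differentiable one_ne_zero) R hR.posSemidef K (α ^ 2) (pow_pos hα 2) t₀ t₁ xr x ur
      (fun t ht => (hxr t ht).hasDerivWithinAt) fun t ht => (hx t ht).hasDerivWithinAt⟩
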